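/- Let L be a commutative subspace lattice on H and Φ a rank preserving linear map on Alg L. Let N ∈ L with dim N ≥ 2 and dim N₋^⊥ = 1, let x, y be linearly independent vectors in N, let f be a nonzero vector in N₋^⊥, and suppose u, v, p, q are nonzero vectors in H with Φ(x⊗f*) = u⊗v* and Φ(y⊗f*) = p⊗q*. Then exactly one of the following holds: (1) u ∼ p and v ≁ q; (2) u ≁ p and v ∼ q. -/

import Mathlib

open scoped InnerProductSpace

noncomputable section

/-- The join (closed linear span) of a family of subspaces of a Hilbert space. -/
def closedJoin {H : Type*} [NormedAddCommGroup H] [InnerProductSpace ℂ H]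
    (S : Set (Submodule ℂ H)) : Submodule ℂ H :=
  (sSup S).topologicalClosure

/-- A subspace lattice on `H`: a family of closed subspaces containing `{0}` and `H`,
closed under arbitrary intersections and arbitrary closed linear spans. -/
structure IsSubspaceLattice {H : Type*} [NormedAddCommGroup H] [InnerProductSpace ℂ H]
    (L : Set (Submodule ℂ H)) : Prop where
  isClosed : ∀ E ∈ L, IsClosed (E : Set H)
  bot_mem : ⊥ ∈ L
  top_mem : ⊤ ∈ L
  sInf_mem : ∀ S : Set (Submodule ℂ H), S ⊆ L → sInf S ∈ L
  join_mem : ∀ S : Set (Submodule ℂ H), S ⊆ L → closedJoin S ∈ L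

/-- `M₋`: the join of all members of `L` that do not contain `M`. -/
def minus {H : Type*} [NormedAddCommGroup H] [InnerProductSpace ℂ H]
    (L : Set (Submodule ℂ H)) (M : Submodule ℂ H) : Submodule ℂ H :=
  closedJoin {E | E ∈ L ∧ ¬ M ≤ E}

open Classical in
/-- The orthogonal projection of `H` onto a closed subspace `E`, as an operator on `H`
(junk value `0` if `E` is not closed). -/
def projOf {H : Type*} [NormedAddCommGroup H] [InnerProductSpace ℂ H] [CompleteSpace H]
    (E : Submodule ℂ H) : H →L[ℂ] H :=
  if h : IsClosed (E : Set H) then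
    haveI : CompleteSpace E := h.completeSpace_coe
    E.subtypeL.comp (Submodule.orthogonalProjectionOnto E)
  else 0

/-- A commutative subspace lattice: the orthogonal projections onto members commute. -/
structure IsCSL {H : Type*} [NormedAddCommGroup H] [InnerProductSpace ℂ H] [CompleteSpace H]
    (L : Set (Submodule ℂ H)) extends IsSubspaceLattice L : Prop where
  commutes : ∀ E ∈ L, ∀ F ∈ L, projOf E * projOf F = projOf F * projOf E

/-- Complete distributivity of the lattice `L` (meets are intersections, joins are
closed linear spans). -/
def IsCompletelyDistributive {H : Type*} [NormedAddCommGroup H] [InnerProductSpace ℂ H]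
    (L : Set (Submodule ℂ H)) : Prop :=
  ∀ (I : Type) (J : I → Type) (E : (i : I) → J i → Submodule ℂ H),
    (∀ i j, E i j ∈ L) →
     ((⨅ i, closedJoin (Set.range (E i)))
        = closedJoin (Set.range fun φ : (∀ i, J i) => ⨅ i, E i (φ i)))
    ∧ (closedJoin (Set.range fun i => ⨅ j, E i j)
        = ⨅ φ : (∀ i, J i), closedJoin (Set.range fun i => E i (φ i)))

/-- `Alg L`: all bounded operators leaving every member of `L` invariant. -/
def algL {H : Type*} [NormedAddCommGroup H] [InnerProductSpace ℂ H]
    (L : Set (Submodule ℂ H)) : Set (H →L[ℂ] H) :=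
  {T | ∀ E ∈ L, ∀ x ∈ E, T x ∈ E}

/-- The rank one operator `x ⊗ f* : h ↦ ⟨h, f⟩ x`. -/
def rankOne {H : Type*} [NormedAddCommGroup H] [InnerProductSpace ℂ H]
    (x f : H) : H →L[ℂ] H :=
  (innerSL ℂ f).smulRight x

/-- The rank of a bounded operator: the dimension of its range. -/
def opRank {H : Type*} [NormedAddCommGroup H] [InnerProductSpace ℂ H]
    (T : H →L[ℂ] H) : Cardinal :=
  Module.rank ℂ (LinearMap.range (T : H →ₗ[ℂ] H))

/-- `Φ` is a linear map of `Alg L` into itself. -/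
structure IsLinearOnAlg {H : Type*} [NormedAddCommGroup H] [InnerProductSpace ℂ H]
    (L : Set (Submodule ℂ H)) (Φ : (H →L[ℂ] H) → (H →L[ℂ] H)) : Prop where
  maps : ∀ A ∈ algL L, Φ A ∈ algL L
  map_add : ∀ A ∈ algL L, ∀ B ∈ algL L, Φ (A + B) = Φ A + Φ B
  map_smul : ∀ (c : ℂ), ∀ A ∈ algL L, Φ (c • A) = c • Φ A

/-- `Φ` preserves the rank of every finite rank operator in `Alg L`. -/
def RankPreserving {H : Type*} [NormedAddCommGroup H] [InnerProductSpace ℂ H]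
    (L : Set (Submodule ℂ H)) (Φ : (H →L[ℂ] H) → (H →L[ℂ] H)) : Prop :=
  ∀ A ∈ algL L, opRank A < Cardinal.aleph0 → opRank (Φ A) = opRank A

/-- `a ∼ b`: (nonzero) vectors `a` and `b` are linearly dependent. -/
def Dep {H : Type*} [NormedAddCommGroup H] [InnerProductSpace ℂ H] (a b : H) : Prop :=
  ∃ c : ℂ, c ≠ 0 ∧ b = c • a

/-- `N` is consistent with respect to `Φ`. -/
def Consistent {H : Type*} [NormedAddCommGroup H] [InnerProductSpace ℂ H]
    (L : Set (Submodule ℂ H)) (Φ : (H →L[ℂ] H) → (H →L[ℂ] H))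
    (N : Submodule ℂ H) : Prop :=
  N ≠ ⊥ ∧ minus L N ≠ ⊤ ∧
    ∃ (U : N →ₗ[ℂ] H) (V : ((minus L N)ᗮ : Submodule ℂ H) →ₗ[ℂ] H),
      ∀ (x : N) (f : ((minus L N)ᗮ : Submodule ℂ H)),
        Φ (rankOne (x : H) (f : H)) = rankOne (U x) (V f)

/-- `N` is twisted with respect to `Φ`. -/
def Twisted {H : Type*} [NormedAddCommGroup H] [InnerProductSpace ℂ H]
    (L : Set (Submodule ℂ H)) (Φ : (H →L[ℂ] H) → (H →L[ℂ] H))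
    (N : Submodule ℂ H) : Prop :=
  N ≠ ⊥ ∧ minus L N ≠ ⊤ ∧
    ∃ (U : ((minus L N)ᗮ : Submodule ℂ H) →ₗ⋆[ℂ] H) (V : N →ₗ⋆[ℂ] H),
      ∀ (x : N) (f : ((minus L N)ᗮ : Submodule ℂ H)),
        Φ (rankOne (x : H) (f : H)) = rankOne (U f) (V x)

/-- `N` is isolated: `dim N = 1` and `N^⊥ ∈ L`. -/
def Isolated {H : Type*} [NormedAddCommGroup H] [InnerProductSpace ℂ H]
    (L : Set (Submodule ℂ H)) (N : Submodule ℂ H) : Prop :=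
  Module.rank ℂ N = 1 ∧ Nᗮ ∈ L

/-- The family `F` of all `N ∈ L` with `N ≠ {0}` and `N₋ ≠ H`. -/
def famF {H : Type*} [NormedAddCommGroup H] [InnerProductSpace ℂ H]
    (L : Set (Submodule ℂ H)) : Set (Submodule ℂ H) :=
  {N | N ∈ L ∧ N ≠ ⊥ ∧ minus L N ≠ ⊤}

/-- Subspaces are comparable if one contains the other. -/
def Comparable' {H : Type*} [NormedAddCommGroup H] [InnerProductSpace ℂ H]
    (M N : Submodule ℂ H) : Prop :=
  M ≤ N ∨ N ≤ M

/-- There is a chain in `F` from `M` to `N`. -/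
def ChainConn {H : Type*} [NormedAddCommGroup H] [InnerProductSpace ℂ H]
    (L : Set (Submodule ℂ H)) (M N : Submodule ℂ H) : Prop :=
  ∃ (n : ℕ) (c : Fin (n + 1) → Submodule ℂ H),
    (∀ k, c k ∈ famF L) ∧ c 0 = M ∧ c (Fin.last n) = N ∧
      ∀ k : Fin n, Comparable' (c k.castSucc) (c k.succ)

/-- `𝔊_N`: all members of `F` that can be connected to `N` by a chain. -/
def GSet {H : Type*} [NormedAddCommGroup H] [InnerProductSpace ℂ H]
    (L : Set (Submodule ℂ H)) (N : Submodule ℂ H) : Set (Submodule ℂ H) :=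
  {M | M ∈ famF L ∧ ChainConn L N M}

end

/-!
The operators `(a x + b y) ⊗ f*` with `(a, b) ≠ 0` all lie in `Alg L` and have rank one, so `Φ`
turns them into a pencil `a (u ⊗ v*) + b (p ⊗ q*)` of rank one operators. If both `u, p` and `v, q`
were linearly independent, the sum `u ⊗ v* + p ⊗ q*` would have rank two; if neither were, then
`p ⊗ q*` would be a multiple of `u ⊗ v*` and the pencil would contain `0`.
-/

section RankOnePencil

variable {𝕜 E F : Type*} [RCLike 𝕜] [NormedAddCommGroup F] [InnerProductSpace 𝕜 F]

open InnerProductSpace (rankOne_eq_zero rankOne_apply rank_rankOne)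

theorem exists_forall_inner_eq_of_linearIndependent {ι : Type*} [Finite ι] {y : ι → F}
    (hy : LinearIndependent 𝕜 y) (c : ι → 𝕜) : ∃ h : F, ∀ i, inner 𝕜 (y i) h = c i := by
  classical
  have := Fintype.ofFinite ι
  have hdet : IsUnit (Matrix.gram 𝕜 y).det :=
    (Matrix.det_gram_ne_zero_iff_linearIndependent.mpr hy).isUnit
  obtain ⟨d, rfl⟩ := Matrix.mulVec_surjective_iff_isUnit.mpr
    ((Matrix.isUnit_iff_isUnit_det _).mpr hdet) c
  refine ⟨∑ j, d j • y j, fun i ↦ ?_⟩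
  simp only [inner_sum, inner_smul_right, Matrix.mulVec, dotProduct, Matrix.gram_apply, mul_comm]

variable [NormedAddCommGroup E] [NormedSpace 𝕜 E]

theorem range_sum_rankOne {ι : Type*} [Fintype ι] (x : ι → E) {y : ι → F}
    (hy : LinearIndependent 𝕜 y) :
    (∑ i, InnerProductSpace.rankOne 𝕜 (x i) (y i)).range = Submodule.span 𝕜 (Set.range x) := by
  classical
  apply le_antisymm
  · rintro _ ⟨h, rfl⟩
    simp only [ContinuousLinearMap.coe_coe, sum_apply, rankOne_apply]
    exact sum_mem fun i _ ↦ Submodule.smul_mem _ _ (Submodule.subset_span ⟨i, rfl⟩)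
  · rw [Submodule.span_le]
    rintro _ ⟨i, rfl⟩
    obtain ⟨h, hh⟩ := exists_forall_inner_eq_of_linearIndependent hy (Pi.single i 1)
    exact ⟨h, by simp [hh, Pi.single_apply, ite_smul]⟩

theorem rank_sum_rankOne {ι : Type*} [Fintype ι] {x : ι → E} {y : ι → F}
    (hx : LinearIndependent 𝕜 x) (hy : LinearIndependent 𝕜 y) :
    (∑ i, InnerProductSpace.rankOne 𝕜 (x i) (y i)).rank = Fintype.card ι := by
  have := FiniteDimensional.span_of_finite 𝕜 (Set.finite_range x)
  rw [LinearMap.rank, range_sum_rankOne x hy, ← finrank_span_eq_card hx, Module.finrank_eq_rank]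

theorem rank_rankOne_eq_one_iff {x : E} {y : F} :
    (InnerProductSpace.rankOne 𝕜 x y).rank = 1 ↔ x ≠ 0 ∧ y ≠ 0 := by
  refine ⟨fun h ↦ not_or.mp fun h0 ↦ ?_, fun h ↦ rank_rankOne h.1 h.2⟩
  rw [(rankOne_eq_zero (𝕜 := 𝕜)).mpr h0] at h
  simp at h

theorem xor_linearIndependent_of_forall_rank_eq_one {u p : E} {v q : F}
    (h : ∀ a b : 𝕜, a ≠ 0 ∨ b ≠ 0 →
      (a • InnerProductSpace.rankOne 𝕜 u v + b • InnerProductSpace.rankOne 𝕜 p q).rank = 1) :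
    Xor (LinearIndependent 𝕜 ![u, p]) (LinearIndependent 𝕜 ![v, q]) := by
  have not_both : ¬(LinearIndependent 𝕜 ![u, p] ∧ LinearIndependent 𝕜 ![v, q]) := by
    rintro ⟨hup, hvq⟩
    have hrank_two := rank_sum_rankOne hup hvq
    have hrank_one := h 1 1 (.inl one_ne_zero)
    simp only [Fin.sum_univ_two, Matrix.cons_val_zero, Matrix.cons_val_one, Fintype.card_fin]
      at hrank_two
    simp only [one_smul, hrank_two] at hrank_one
    norm_num at hrank_one
  have not_neither : LinearIndependent 𝕜 ![u, p] ∨ LinearIndependent 𝕜 ![v, q] := by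
    obtain ⟨hu, hv⟩ : u ≠ 0 ∧ v ≠ 0 :=
      rank_rankOne_eq_one_iff.mp (by simpa using h 1 0 (.inl one_ne_zero))
    by_contra! ⟨hup, hvq⟩
    simp only [LinearIndependent.pair_iff' hu, not_forall, not_not] at hup
    simp only [LinearIndependent.pair_iff' hv, not_forall, not_not] at hvq
    obtain ⟨c, rfl⟩ := hup
    obtain ⟨d, rfl⟩ := hvq
    have hrank_zero := h (-(c * starRingEnd 𝕜 d)) 1 (.inr one_ne_zero)
    simp [smul_smul] at hrank_zero
  grind

end RankOnePencil

section AlgL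

variable {H : Type*} [NormedAddCommGroup H] [InnerProductSpace ℂ H]

theorem rankOne_eq_innerProductSpace_rankOne (x f : H) :
    rankOne x f = InnerProductSpace.rankOne ℂ x f := rfl

theorem rankOne_add_left (x y f : H) : rankOne (x + y) f = rankOne x f + rankOne y f :=
  (InnerProductSpace.rankOne ℂ).map_add₂ x y f

theorem rankOne_smul_left (c : ℂ) (x f : H) : rankOne (c • x) f = c • rankOne x f :=
  (InnerProductSpace.rankOne ℂ).map_smul₂ c x f

theorem dep_iff_not_linearIndependent {a b : H} (ha : a ≠ 0) (hb : b ≠ 0) :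
    Dep a b ↔ ¬LinearIndependent ℂ ![a, b] := by
  simp only [LinearIndependent.pair_iff' ha, not_forall, not_not]
  constructor
  · rintro ⟨c, -, rfl⟩
    exact ⟨c, rfl⟩
  · rintro ⟨c, rfl⟩
    exact ⟨c, left_ne_zero_of_smul hb, rfl⟩

variable {L : Set (Submodule ℂ H)} {Φ : (H →L[ℂ] H) → (H →L[ℂ] H)} {N : Submodule ℂ H} {x f : H}

theorem le_minus {E : Submodule ℂ H} (hE : E ∈ L) (hNE : ¬N ≤ E) : E ≤ minus L N :=
  (le_sSup (show E ∈ {E | E ∈ L ∧ ¬N ≤ E} from ⟨hE, hNE⟩)).trans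
    (Submodule.le_topologicalClosure _)

theorem rankOne_mem_algL (hx : x ∈ N) (hf : f ∈ (minus L N)ᗮ) : rankOne x f ∈ algL L := by
  intro E hE z hz
  rw [rankOne_eq_innerProductSpace_rankOne, InnerProductSpace.rankOne_apply]
  by_cases hNE : N ≤ E
  · exact E.smul_mem _ (hNE hx)
  · rw [Submodule.inner_left_of_mem_orthogonal (le_minus hE hNE hz) hf, zero_smul]
    exact E.zero_mem

theorem RankPreserving.opRank_map_rankOne (hrank : RankPreserving L Φ) (hx : x ∈ N)
    (hf : f ∈ (minus L N)ᗮ) (hx0 : x ≠ 0) (hf0 : f ≠ 0) : opRank (Φ (rankOne x f)) = 1 := by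
  have hone : opRank (rankOne x f) = 1 := InnerProductSpace.rank_rankOne hx0 hf0
  rw [hrank _ (rankOne_mem_algL hx hf) (hone ▸ Cardinal.one_lt_aleph0), hone]

theorem RankPreserving.ne_zero_of_map_rankOne_eq (hrank : RankPreserving L Φ) {u v : H}
    (hx : x ∈ N) (hf : f ∈ (minus L N)ᗮ) (hx0 : x ≠ 0) (hf0 : f ≠ 0)
    (hΦ : Φ (rankOne x f) = rankOne u v) : u ≠ 0 ∧ v ≠ 0 := by
  have hone := hrank.opRank_map_rankOne hx hf hx0 hf0
  rw [hΦ] at hone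
  exact rank_rankOne_eq_one_iff.mp hone

theorem IsLinearOnAlg.map_rankOne_smul_add_smul (hlin : IsLinearOnAlg L Φ) {y : H} (hx : x ∈ N)
    (hy : y ∈ N) (hf : f ∈ (minus L N)ᗮ) (a b : ℂ) :
    Φ (rankOne (a • x + b • y) f) = a • Φ (rankOne x f) + b • Φ (rankOne y f) := by
  rw [rankOne_add_left, hlin.map_add _ (rankOne_mem_algL (N.smul_mem a hx) hf) _
    (rankOne_mem_algL (N.smul_mem b hy) hf), rankOne_smul_left, rankOne_smul_left,
    hlin.map_smul _ _ (rankOne_mem_algL hx hf), hlin.map_smul _ _ (rankOne_mem_algL hy hf)]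

end AlgL

theorem stmt_4_general {H : Type*} [NormedAddCommGroup H] [InnerProductSpace ℂ H]
    {L : Set (Submodule ℂ H)} {Φ : (H →L[ℂ] H) → (H →L[ℂ] H)} (hlin : IsLinearOnAlg L Φ)
    (hrank : RankPreserving L Φ) {N : Submodule ℂ H} {x y f u v p q : H}
    (hx : x ∈ N) (hy : y ∈ N) (hxy : LinearIndependent ℂ ![x, y])
    (hf : f ∈ (minus L N)ᗮ) (hf0 : f ≠ 0)
    (hG : Φ (rankOne x f) = rankOne u v) (hH : Φ (rankOne y f) = rankOne p q) :
    Xor (Dep u p ∧ ¬Dep v q) (¬Dep u p ∧ Dep v q) := by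
  have hpencil : ∀ a b : ℂ, a ≠ 0 ∨ b ≠ 0 → opRank (a • rankOne u v + b • rankOne p q) = 1 := by
    intro a b hab
    have hne : a • x + b • y ≠ 0 := fun h0 ↦
      not_and_or.mpr hab (LinearIndependent.pair_iff.mp hxy a b h0)
    rw [← hG, ← hH, ← hlin.map_rankOne_smul_add_smul hx hy hf]
    exact hrank.opRank_map_rankOne (N.add_mem (N.smul_mem a hx) (N.smul_mem b hy)) hf hne hf0
  obtain ⟨hu, hv⟩ := hrank.ne_zero_of_map_rankOne_eq hx hf (hxy.ne_zero 0) hf0 hG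
  obtain ⟨hp, hq⟩ := hrank.ne_zero_of_map_rankOne_eq hy hf (hxy.ne_zero 1) hf0 hH
  rw [dep_iff_not_linearIndependent hu hp, dep_iff_not_linearIndependent hv hq]
  have hxor := xor_linearIndependent_of_forall_rank_eq_one hpencil
  grind

theorem stmt_4 {H : Type*} [NormedAddCommGroup H] [InnerProductSpace ℂ H]
    [CompleteSpace H] [TopologicalSpace.SeparableSpace H]
    (L : Set (Submodule ℂ H)) (hL : IsCSL L)
    (Φ : (H →L[ℂ] H) → (H →L[ℂ] H)) (hlin : IsLinearOnAlg L Φ)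
    (hrank : RankPreserving L Φ)
    (N : Submodule ℂ H) (hN : N ∈ L)
    (hdimN : 2 ≤ Module.rank ℂ N)
    (hdimN' : Module.rank ℂ (((minus L N)ᗮ : Submodule ℂ H) : Type _) = 1)
    (x y f u v p q : H)
    (hx : x ∈ N) (hy : y ∈ N) (hxy : LinearIndependent ℂ ![x, y])
    (hf : f ∈ (minus L N)ᗮ) (hf0 : f ≠ 0)
    (hu : u ≠ 0) (hv : v ≠ 0) (hp : p ≠ 0) (hq : q ≠ 0)
    (hG : Φ (rankOne x f) = rankOne u v)
    (hH : Φ (rankOne y f) = rankOne p q) :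
    Xor' (Dep u p ∧ ¬ Dep v q) (¬ Dep u p ∧ Dep v q) := by
  exact stmt_4_general hlin hrank hx hy hxy hf hf0 hG hH
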